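/- Suppose Γ is a configuration satisfying the Working Conditions, let φ be an embedding of Γ into ℤ^N, and suppose Γ has a bad vertex x with w'(x) ≥ 1. Then the restriction of φ to the vertices of the outside part of Γ is standard. -/

import Mathlib

namespace LensPaper

/-- A finite weighted simple graph: the combinatorial data underlying a configuration
(a disjoint union of weighted linear graphs).  The fact that every connected component
is a path is recorded separately by `Config.IsLinear`. -/
structure Config where
  V : Type
  fin : Fintype V
  deq : DecidableEq V
  graph : SimpleGraph V
  adjDec : DecidableRel graph.Adj
  w : V → ℤ

attribute [instance] Config.fin Config.deq Config.adjDec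

namespace Config

/-- The degree of a vertex. -/
noncomputable def deg (C : Config) (v : C.V) : ℕ := (C.graph.neighborSet v).ncard

/-- A configuration: every component is a path, i.e. all degrees are at most `2` and the
graph is acyclic. -/
def IsLinear (C : Config) : Prop :=
  (∀ v : C.V, C.deg v ≤ 2) ∧ C.graph.IsAcyclic

/-- The adjusted weight `w'(v) = w(v) - deg(v)`. -/
noncomputable def adjw (C : Config) (v : C.V) : ℤ := C.w v - C.deg v

/-- A vertex is bad if it is adjacent to two distinct vertices of positive adjusted
weight. -/
def IsBad (C : Config) (x : C.V) : Prop :=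
  ∃ u v : C.V, u ≠ v ∧ C.graph.Adj x u ∧ C.graph.Adj x v ∧ 0 < C.adjw u ∧ 0 < C.adjw v

/-- A leaf: a vertex of degree at most one. -/
def IsLeaf (C : Config) (v : C.V) : Prop := C.deg v ≤ 1

/-- `v 0, v 1, …, v m` is a chain of consecutive (distinct) vertices. -/
def IsChain (C : Config) (m : ℕ) (v : ℕ → C.V) : Prop :=
  (∀ i ≤ m, ∀ j ≤ m, v i = v j → i = j) ∧ ∀ i < m, C.graph.Adj (v i) (v (i + 1))

/-- The chain `v 0, …, v m` has the list `p` as its sequence of adjusted weights. -/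
def ChainPattern (C : Config) (m : ℕ) (v : ℕ → C.V) (p : List ℤ) : Prop :=
  C.IsChain m v ∧ m + 1 = p.length ∧ ∀ i : Fin p.length, C.adjw (v i) = p.get i

/-- `Γ` contains a chain of consecutive vertices whose adjusted weights, read in order,
form the list `p`. -/
def HasPattern (C : Config) (p : List ℤ) : Prop := ∃ m v, C.ChainPattern m v p

/-- A chain realizing a bad-part pattern `p` (each entry of `p` is an adjusted weight
together with a flag marking the bad positions): the chain has the prescribed adjusted
weights, and the bad vertices of the configuration are exactly the vertices of the chain
in the flagged positions. -/
def IsBadPartChain (C : Config) (p : List (ℤ × Bool)) (m : ℕ) (v : ℕ → C.V) : Prop :=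
  C.IsChain m v ∧ m + 1 = p.length ∧
  (∀ i : Fin p.length, C.adjw (v i) = (p.get i).1) ∧
  (∀ x : C.V, C.IsBad x ↔ ∃ i : Fin p.length, (p.get i).2 = true ∧ v i = x)

end Config

/-- The chains of adjusted weights forbidden by Working Condition VI. -/
def forbiddenPatterns : List (List ℤ) :=
  [[1, 0, 0, 2], [1, 0, 0, 3], [1, 0, 0, 0, 3], [1, 1, 0, 0, 1, 2], [3, 1, 0, 0, 1],
   [1, 0, 1, 2], [1, 0, 1, 3], [1, 1, 0, 2], [1, 1, 0, 1, 1, 2]]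

/-- The bad-part patterns of Working Condition VII; `true` marks the bad positions. -/
def badPatterns : List (List (ℤ × Bool)) :=
  [[(1, false), (0, true), (1, false)],
   [(1, false), (0, true), (2, false)],
   [(1, false), (0, true), (3, false)],
   [(1, false), (1, true), (1, false)],
   [(1, false), (1, true), (2, false)],
   [(1, false), (2, true), (1, false)],
   [(1, false), (0, true), (1, false), (0, true), (1, false)],
   [(1, false), (0, true), (1, false), (0, true), (2, false)],
   [(1, false), (0, true), (1, false), (1, true), (1, false)],
   [(1, false), (0, true), (1, false), (1, true), (2, false)],
   [(1, false), (1, true), (1, true), (1, false)],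
   [(1, false), (1, true), (1, true), (1, true), (1, false)],
   [(1, false), (1, true), (2, true), (1, false)]]

namespace Config

/-- The Working Conditions (I)–(VII). -/
def WorkingConditions (C : Config) : Prop :=
  (∀ v : C.V, 2 ≤ C.w v) ∧
  (∀ v : C.V, C.adjw v ≤ 3) ∧
  (∀ u v : C.V, 1 < C.adjw u → 1 < C.adjw v → u = v) ∧
  (∀ v x : C.V, 1 < C.adjw v → C.IsBad x → C.adjw x = 1 → C.graph.Adj x v) ∧
  ((∃ v : C.V, C.adjw v = 3) →
     ∀ u u' : C.V, C.graph.Adj u u' → C.adjw u = 1 → C.adjw u' = 1 → False) ∧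
  (∀ u v x : C.V, C.graph.Adj u v → C.adjw u = 1 → C.adjw v = 1 →
     C.IsBad x → C.adjw x = 2 → C.graph.Adj x u ∨ C.graph.Adj x v) ∧
  (∀ p ∈ forbiddenPatterns, ¬ C.HasPattern p) ∧
  ((∃ x : C.V, C.IsBad x) → ∃ p ∈ badPatterns, ∃ m v, C.IsBadPartChain p m v)

end Config

/-- The standard inner product on `ℤ^N`. -/
def dot {N : ℕ} (x y : Fin N → ℤ) : ℤ := ∑ i, x i * y i

/-- The support of a vector of `ℤ^N` with respect to the standard orthonormal basis. -/
def supp {N : ℕ} (x : Fin N → ℤ) : Finset (Fin N) :=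
  Finset.univ.filter fun i => x i ≠ 0

namespace Config

/-- An embedding of a configuration into `ℤ^N`. -/
def IsEmbedding (C : Config) (N : ℕ) (φ : C.V → Fin N → ℤ) : Prop :=
  ∀ u v : C.V, dot (φ u) (φ v) =
    if u = v then C.w u else if C.graph.Adj u v then -1 else 0

/-- The restriction of `φ` to `S` is standard. -/
def IsStandardOn (C : Config) (N : ℕ) (φ : C.V → Fin N → ℤ) (S : Set C.V) : Prop :=
  ∀ u ∈ S, ∀ v ∈ S,
    ((supp (φ u) ∩ supp (φ v)).card : ℤ) =
      if u = v then C.w v else if C.graph.Adj u v then 1 else 0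

/-- A standard embedding. -/
def IsStandard (C : Config) (N : ℕ) (φ : C.V → Fin N → ℤ) : Prop :=
  C.IsStandardOn N φ Set.univ

/-- The restriction of `φ` to `S` is semi-standard at `x`. -/
def IsSemiStandardAtOn (C : Config) (N : ℕ) (φ : C.V → Fin N → ℤ) (x : C.V)
    (S : Set C.V) : Prop :=
  (∀ u ∈ S, ∀ v ∈ S,
    ((supp (φ u) ∩ supp (φ v)).card : ℤ) =
      if u = v then C.w v
      else if C.graph.Adj u v then 1
      else if C.graph.Adj x u ∧ C.graph.Adj x v then 2
      else 0) ∧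
  (∀ u ∈ S, ∀ v ∈ S, u ≠ v → C.graph.Adj x u → C.graph.Adj x v →
    (supp (φ u) ∩ supp (φ x) ∩ supp (φ v)).card = 1)

/-- A semi-standard embedding: semi-standard at some bad vertex. -/
def IsSemiStandard (C : Config) (N : ℕ) (φ : C.V → Fin N → ℤ) : Prop :=
  ∃ x : C.V, C.IsBad x ∧ C.IsSemiStandardAtOn N φ x Set.univ

/-- A candidate for the extended bad part: a chain containing the bad part whose two
ends are either leaves or preceded by two consecutive vertices of vanishing adjusted
weight. -/
def IsEBPCand (C : Config) (m : ℕ) (v : ℕ → C.V) : Prop :=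
  C.IsChain m v ∧
  (∀ p ∈ badPatterns, ∀ mb vb, C.IsBadPartChain p mb vb →
     ∀ i ≤ mb, ∃ j ≤ m, v j = vb i) ∧
  (C.IsLeaf (v 0) ∨ (2 ≤ m ∧ C.adjw (v 1) = 0 ∧ C.adjw (v 2) = 0)) ∧
  (C.IsLeaf (v m) ∨ (2 ≤ m ∧ C.adjw (v (m - 1)) = 0 ∧ C.adjw (v (m - 2)) = 0))

/-- The extended bad part: a candidate with the fewest vertices. -/
def IsExtBadPart (C : Config) (m : ℕ) (v : ℕ → C.V) : Prop :=
  C.IsEBPCand m v ∧ ∀ m' v', C.IsEBPCand m' v' → m ≤ m'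

/-- The set of vertices of the chain `v 0, …, v m`. -/
def ebpSet (C : Config) (m : ℕ) (v : ℕ → C.V) : Set C.V := {y | ∃ i ≤ m, v i = y}

/-- The outside part of `Γ` relative to the extended bad part `v 0, …, v m`. -/
def OutsidePart (C : Config) (m : ℕ) (v : ℕ → C.V) : Set C.V :=
  {x | ∀ i ≤ m, v i ≠ x}
  ∪ {x | ¬ C.IsLeaf (v 0) ∧ (x = v 0 ∨ x = v 1 ∨ x = v 2)}
  ∪ {x | ¬ C.IsLeaf (v m) ∧ (x = v m ∨ x = v (m - 1) ∨ x = v (m - 2))}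

/-- A screw at the front end of the extended bad part. -/
def IsFrontScrew (C : Config) (N : ℕ) (φ : C.V → Fin N → ℤ) (m : ℕ) (v : ℕ → C.V)
    (e : Fin N) : Prop :=
  ¬ C.IsLeaf (v 0) ∧ 3 ≤ m ∧ φ (v 2) e ≠ 0 ∧ φ (v 3) e ≠ 0

/-- A screw at the back end of the extended bad part. -/
def IsBackScrew (C : Config) (N : ℕ) (φ : C.V → Fin N → ℤ) (m : ℕ) (v : ℕ → C.V)
    (e : Fin N) : Prop :=
  ¬ C.IsLeaf (v m) ∧ 3 ≤ m ∧ φ (v (m - 2)) e ≠ 0 ∧ φ (v (m - 3)) e ≠ 0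

/-- All screws of `Γ` (with respect to `φ`) are clean. -/
def AllScrewsClean (C : Config) (N : ℕ) (φ : C.V → Fin N → ℤ) (m : ℕ)
    (v : ℕ → C.V) : Prop :=
  (∀ e : Fin N, C.IsFrontScrew N φ m v e →
    ∀ u : C.V, u ≠ v 2 → u ≠ v 3 → φ u e = 0) ∧
  (∀ e : Fin N, C.IsBackScrew N φ m v e →
    ∀ u : C.V, u ≠ v (m - 2) → u ≠ v (m - 3) → φ u e = 0)

end Config

section vec
variable {N : ℕ}

/-- All entries are `0`, `1` or `-1`. -/
def Tern (x : Fin N → ℤ) : Prop := ∀ i, x i = 0 ∨ x i = 1 ∨ x i = -1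

lemma dot_comm' (x y : Fin N → ℤ) : dot x y = dot y x := by
  unfold dot; exact Finset.sum_congr rfl fun i _ => mul_comm _ _

lemma mem_supp {x : Fin N → ℤ} {i : Fin N} : i ∈ supp x ↔ x i ≠ 0 := by simp [supp]

lemma card_supp {x : Fin N → ℤ} (hx : Tern x) : ((supp x).card : ℤ) = dot x x := by
  unfold supp dot
  rw [Finset.card_filter]; push_cast
  refine Finset.sum_congr rfl fun i _ => ?_
  rcases hx i with h | h | h <;> simp [h]

lemma card_inter {x y : Fin N → ℤ} (hx : Tern x) (hy : Tern y) :
    ∃ k : ℤ, ((supp x ∩ supp y).card : ℤ) = dot x y + 2 * k := by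
  have h1 : supp x ∩ supp y = Finset.univ.filter fun i => x i ≠ 0 ∧ y i ≠ 0 := by
    ext i; simp [supp]
  have h2 : (2 : ℤ) ∣ ((supp x ∩ supp y).card : ℤ) - dot x y := by
    rw [h1, Finset.card_filter]; unfold dot; push_cast
    rw [← Finset.sum_sub_distrib]
    refine Finset.dvd_sum fun i _ => ?_
    rcases hx i with h | h | h <;> rcases hy i with h' | h' | h' <;> simp [h, h']
  obtain ⟨k, hk⟩ := h2
  exact ⟨k, by linarith⟩

lemma more {x y : Fin N → ℤ} (T : Finset (Fin N)) (h : dot x y ≠ ∑ i ∈ T, x i * y i) :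
    ∃ i, i ∉ T ∧ x i ≠ 0 ∧ y i ≠ 0 := by
  by_contra hc
  push Not at hc
  apply h
  unfold dot
  symm
  refine Finset.sum_subset (Finset.subset_univ _) fun i _ hi => ?_
  by_cases h0 : x i = 0
  · simp [h0]
  · simp [hc i hi h0]

lemma more3 {x y : Fin N → ℤ} {a b c : Fin N} (hab : a ≠ b) (hac : a ≠ c) (hbc : b ≠ c)
    (h : dot x y ≠ x a * y a + x b * y b + x c * y c) :
    ∃ i, i ≠ a ∧ i ≠ b ∧ i ≠ c ∧ x i ≠ 0 ∧ y i ≠ 0 := by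
  obtain ⟨i, h1, h2⟩ := more (x := x) (y := y) {a, b, c} (by
    rw [Finset.sum_insert (by simp [hab, hac]), Finset.sum_insert (by simp [hbc]),
      Finset.sum_singleton]
    intro h'; apply h; rw [h']; ring)
  simp only [Finset.mem_insert, Finset.mem_singleton, not_or] at h1
  exact ⟨i, h1.1, h1.2.1, h1.2.2, h2⟩

lemma more4 {x y : Fin N → ℤ} {a b c d : Fin N} (hab : a ≠ b) (hac : a ≠ c) (hbc : b ≠ c)
    (had : d ≠ a) (hbd : d ≠ b) (hcd : d ≠ c)
    (h : dot x y ≠ x a * y a + x b * y b + x c * y c + x d * y d) :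
    ∃ i, i ≠ a ∧ i ≠ b ∧ i ≠ c ∧ i ≠ d ∧ x i ≠ 0 ∧ y i ≠ 0 := by
  obtain ⟨i, h1, h2⟩ := more (x := x) (y := y) {a, b, c, d} (by
    rw [Finset.sum_insert (by simp [hab, hac, had.symm]),
      Finset.sum_insert (by simp [hbc, hbd.symm]), Finset.sum_insert (by simp [hcd.symm]),
      Finset.sum_singleton]
    intro h'; apply h; rw [h']; ring)
  simp only [Finset.mem_insert, Finset.mem_singleton, not_or] at h1
  exact ⟨i, h1.1, h1.2.1, h1.2.2.1, h1.2.2.2, h2⟩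

lemma exact_supp {x : Fin N → ℤ} (hx : Tern x) (T : Finset (Fin N)) (hT : ∀ i ∈ T, x i ≠ 0)
    (hc : dot x x ≤ T.card) : ∀ y, dot x y = ∑ i ∈ T, x i * y i := by
  have h1 : T ⊆ supp x := fun i hi => mem_supp.2 (hT i hi)
  have h2 : T = supp x := Finset.eq_of_subset_of_card_le h1 (by
    have := card_supp hx; omega)
  intro y
  unfold dot; symm
  refine Finset.sum_subset (Finset.subset_univ _) fun i _ hi => ?_
  rw [h2, mem_supp] at hi
  push Not at hi
  simp [hi]

lemma exact2 {x : Fin N → ℤ} (hx : Tern x) {a b : Fin N} (hab : a ≠ b) (ha : x a ≠ 0)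
    (hb : x b ≠ 0) (hc : dot x x = 2) : ∀ y, dot x y = x a * y a + x b * y b := by
  intro y
  rw [exact_supp hx {a, b} (by simp [ha, hb]) (by rw [Finset.card_pair hab, hc]; rfl) y,
    Finset.sum_pair hab]

lemma exact3 {x : Fin N → ℤ} (hx : Tern x) {a b c : Fin N} (hab : a ≠ b) (hac : a ≠ c)
    (hbc : b ≠ c) (ha : x a ≠ 0) (hb : x b ≠ 0) (hc : x c ≠ 0) (hw : dot x x = 3) :
    ∀ y, dot x y = x a * y a + x b * y b + x c * y c := by
  intro y
  rw [exact_supp hx {a, b, c} (by simp [ha, hb, hc])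
    (by rw [Finset.card_eq_three.2 ⟨a, b, c, hab, hac, hbc, rfl⟩, hw]; rfl) y,
    Finset.sum_insert (by simp [hab, hac]), Finset.sum_pair hbc, add_assoc]

lemma ge_card {x : Fin N → ℤ} (hx : Tern x) (T : Finset (Fin N)) (hT : ∀ i ∈ T, x i ≠ 0) :
    (T.card : ℤ) ≤ dot x x := by
  rw [← card_supp hx]
  exact_mod_cast Finset.card_le_card fun i hi => mem_supp.2 (hT i hi)

lemma ge3 {x : Fin N → ℤ} (hx : Tern x) {a b c : Fin N} (hab : a ≠ b) (hac : a ≠ c)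
    (hbc : b ≠ c) (ha : x a ≠ 0) (hb : x b ≠ 0) (hc : x c ≠ 0) : 3 ≤ dot x x := by
  have := ge_card hx {a, b, c} (by simp [ha, hb, hc])
  rwa [Finset.card_eq_three.2 ⟨a, b, c, hab, hac, hbc, rfl⟩] at this

lemma ge4 {x : Fin N → ℤ} (hx : Tern x) {a b c d : Fin N} (hab : a ≠ b) (hac : a ≠ c)
    (hbc : b ≠ c) (had : d ≠ a) (hbd : d ≠ b) (hcd : d ≠ c)
    (ha : x a ≠ 0) (hb : x b ≠ 0) (hc : x c ≠ 0) (hd : x d ≠ 0) : 4 ≤ dot x x := by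
  have := ge_card hx {d, a, b, c} (by simp [ha, hb, hc, hd])
  rwa [Finset.card_insert_of_notMem (by simp [had, hbd, hcd]),
    Finset.card_eq_three.2 ⟨a, b, c, hab, hac, hbc, rfl⟩] at this

end vec

namespace Config

lemma noCycle (C : Config) (h : C.graph.IsAcyclic) (m : ℕ) (v : ℕ → C.V) (hm : 2 ≤ m)
    (hc : C.IsChain m v) (ha : C.graph.Adj (v 0) (v m)) : False := by
  have key : ∀ k, k ≤ m → ∃ p : C.graph.Walk (v 0) (v k), p.IsPath ∧ p.length = k ∧
      ∀ x ∈ p.support, ∃ i ≤ k, x = v i := by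
    intro k
    induction k with
    | zero => intro _; exact ⟨.nil, by simp, by simp, by simp⟩
    | succ k ih =>
      intro hk
      obtain ⟨p, hp, hl, hs⟩ := ih (by omega)
      refine ⟨p.concat (hc.2 k (by omega)), ?_, by simp [hl], ?_⟩
      · refine hp.concat ?_ _
        intro hmem
        obtain ⟨i, hi, he⟩ := hs _ hmem
        have := hc.1 _ (by omega) _ (by omega) he
        omega
      · intro x hx
        rw [SimpleGraph.Walk.support_concat] at hx
        simp only [List.mem_append, List.mem_singleton] at hx
        rcases hx with hx | hx
        · obtain ⟨i, hi, he⟩ := hs _ hx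
          exact ⟨i, by omega, he⟩
        · exact ⟨k + 1, le_rfl, hx⟩
  obtain ⟨p, hp, hl, -⟩ := key m le_rfl
  have hq : (SimpleGraph.Walk.cons ha .nil).IsPath := by
    simp [ha.ne]
  have := (h.subsingleton_path _ _).elim ⟨p, hp⟩ ⟨_, hq⟩
  have h2 : p.length = 1 := by
    have := congrArg (fun q : C.graph.Path (v 0) (v m) => q.1.length) this
    simpa using this
  omega

/-- Facts used about the configuration. -/
structure Ctx (C : Config) : Prop where
  nn : ∀ v, 0 ≤ C.adjw v
  we : ∀ v, C.w v = C.adjw v + C.deg v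
  w2 : ∀ v, 2 ≤ C.w v
  two : ∀ v a b c, C.graph.Adj v a → C.graph.Adj v b → a ≠ b → C.graph.Adj v c → c = a ∨ c = b
  ex : ∀ v a, C.deg v = 2 → C.graph.Adj v a → ∃ b, b ≠ a ∧ C.graph.Adj v b
  ex1 : ∀ v, C.deg v ≠ 0 → ∃ a, C.graph.Adj v a
  d2 : ∀ v, C.deg v ≤ 2
  d1 : ∀ v, C.deg v ≤ 1 → ∀ a b, C.graph.Adj v a → C.graph.Adj v b → a = b
  le2 : ∀ v, C.adjw v ≤ 2
  spec : ∀ z, 1 < C.adjw z → C.IsBad z ∨ ∃ x, C.IsBad x ∧ C.graph.Adj x z ∧ 0 < C.adjw x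
  c3 : ∀ a b c, C.graph.Adj a b → C.graph.Adj b c → C.graph.Adj a c → False
  c4 : ∀ a b c d, C.graph.Adj a b → C.graph.Adj b c → C.graph.Adj c d → C.graph.Adj a d →
    a ≠ c → b ≠ d → False
  c5 : ∀ a b c d e, C.graph.Adj a b → C.graph.Adj b c → C.graph.Adj c d → C.graph.Adj d e →
    C.graph.Adj a e → a ≠ c → a ≠ d → b ≠ d → b ≠ e → c ≠ e → False
  p1 : ∀ a b c d, C.graph.Adj a b → C.graph.Adj b c → C.graph.Adj c d →
    a ≠ c → a ≠ d → b ≠ d → C.adjw a = 2 → C.adjw b = 0 → C.adjw c = 0 → C.adjw d = 1 → False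
  p2 : ∀ a b c d e f, C.graph.Adj a b → C.graph.Adj b c → C.graph.Adj c d → C.graph.Adj d e →
    C.graph.Adj e f → [a, b, c, d, e, f].Nodup →
    C.adjw a = 2 → C.adjw b = 1 → C.adjw c = 0 → C.adjw d = 0 → C.adjw e = 1 → C.adjw f = 1 → False

/-- Neither bad nor adjacent to a bad vertex. -/
def Good (C : Config) (v : C.V) : Prop := ¬ C.IsBad v ∧ ∀ x, C.graph.Adj x v → ¬ C.IsBad x

lemma deg_facts (C : Config) (h2 : ∀ v, C.deg v ≤ 2) :
    (∀ v a b c, C.graph.Adj v a → C.graph.Adj v b → a ≠ b → C.graph.Adj v c → c = a ∨ c = b) ∧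
    (∀ v a, C.deg v = 2 → C.graph.Adj v a → ∃ b, b ≠ a ∧ C.graph.Adj v b) ∧
    (∀ v, C.deg v ≠ 0 → ∃ a, C.graph.Adj v a) ∧
    (∀ v, C.deg v ≤ 1 → ∀ a b, C.graph.Adj v a → C.graph.Adj v b → a = b) := by
  refine ⟨?_, ?_, ?_, ?_⟩
  · intro v a b c ha hb hab hc
    by_contra hcon
    push Not at hcon
    have h := h2 v
    unfold deg at h
    have : ({a, b, c} : Set C.V).ncard ≤ (C.graph.neighborSet v).ncard :=
      Set.ncard_le_ncard (by
        intro y hy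
        simp only [Set.mem_insert_iff, Set.mem_singleton_iff] at hy
        rcases hy with rfl | rfl | rfl <;> assumption) (Set.toFinite _)
    rw [Set.ncard_eq_three.2 ⟨a, b, c, hab, hcon.1.symm, hcon.2.symm, rfl⟩] at this
    omega
  · intro v a hd ha
    unfold deg at hd
    obtain ⟨b, hb, hne⟩ := Set.exists_ne_of_one_lt_ncard (s := C.graph.neighborSet v) (by omega) a
    exact ⟨b, hne, hb⟩
  · intro v hd
    exact Set.nonempty_of_ncard_ne_zero hd
  · intro v hd a b ha hb
    exact (Set.ncard_le_one (Set.toFinite _)).1 hd a ha b hb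

lemma nchain (C : Config) (l : List C.V) (hl : l ≠ []) (hn : l.Nodup)
    (hc : l.IsChain C.graph.Adj) :
    C.IsChain (l.length - 1) (fun n => l.getD n (l.head hl)) := by
  have hp := List.length_pos_iff.2 hl
  refine ⟨?_, ?_⟩
  · intro i hi j hj h
    simp only at h
    rw [List.getD_eq_getElem _ _ (by omega), List.getD_eq_getElem _ _ (by omega)] at h
    exact (hn.getElem_inj_iff).1 h
  · intro i hi
    simp only
    rw [List.getD_eq_getElem _ _ (by omega), List.getD_eq_getElem _ _ (by omega)]
    exact List.isChain_iff_getElem.1 hc i (by omega)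

lemma mkCtx (C : Config) (hlin : C.IsLinear) (hwc : C.WorkingConditions)
    (x : C.V) (hx : C.IsBad x) (hwx : 1 ≤ C.adjw x) : C.Ctx := by
  obtain ⟨hI, hII, hIIb, hIII, hIV, -, hVI, hVII⟩ := hwc
  obtain ⟨hd, hac⟩ := hlin
  obtain ⟨f1, f2, f3, f4⟩ := C.deg_facts hd
  have hcyc : ∀ l : List C.V, 3 ≤ l.length → l.Nodup → l.IsChain C.graph.Adj →
      ∀ a b, l.head? = some a → l.getLast? = some b → C.graph.Adj a b → False := by
    intro l hl hn hch a b ha hb hab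
    have hne : l ≠ [] := by rintro rfl; simp at hl
    refine C.noCycle hac (l.length - 1) _ (by omega) (C.nchain l hne hn hch) ?_
    have h1 : l.getD 0 (l.head hne) = a := by
      cases l with
      | nil => simp at hl
      | cons c l => simpa using ha
    have h2 : l.getD (l.length - 1) (l.head hne) = b := by
      rw [List.getD_eq_getElem _ _ (by omega)]
      rw [List.getLast?_eq_getElem?] at hb
      rw [List.getElem?_eq_getElem (by omega)] at hb
      simpa using hb
    rw [h1, h2]; exact hab
  have hx2 : C.adjw x ≤ 2 := by
    obtain ⟨p, hp, mb, vb, -, -, hw, hb⟩ := hVII ⟨x, hx⟩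
    obtain ⟨i, hi, rfl⟩ := (hb x).1 hx
    rw [hw i]
    have : ∀ p ∈ badPatterns, ∀ q ∈ p, q.2 = true → q.1 ≤ 2 := by decide
    exact this p hp _ (List.get_mem _ _) hi
  have hpat : ∀ l : List C.V, l ≠ [] → l.Nodup → l.IsChain C.graph.Adj →
      l.map C.adjw ∈ forbiddenPatterns → False := by
    intro l hne hn hch hf
    refine hVI _ hf ⟨l.length - 1, _, C.nchain l hne hn hch, ?_, ?_⟩
    · have := List.length_pos_iff.2 hne
      simp; omega
    · intro i
      have : (i : ℕ) < l.length := by simpa using i.2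
      simp [List.getElem?_eq_getElem this]
  refine
    { nn := ?_, we := ?_, w2 := hI, two := f1, ex := f2, ex1 := f3, d2 := hd, d1 := f4,
      le2 := ?_, spec := ?_, c3 := ?_, c4 := ?_, c5 := ?_, p1 := ?_, p2 := ?_ }
  · intro v; unfold adjw; have := hI v; have := hd v; omega
  · intro v; unfold adjw; omega
  · intro v
    by_contra hc
    have h3 : C.adjw v = 3 := by have := hII v; omega
    by_cases h1 : C.adjw x = 1
    · obtain ⟨a, b, hab, ha, hb, pa, pb⟩ := hx
      by_cases ha1 : C.adjw a = 1
      · exact hIV ⟨v, h3⟩ x a ha h1 ha1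
      · by_cases hb1 : C.adjw b = 1
        · exact hIV ⟨v, h3⟩ x b hb h1 hb1
        · exact hab (hIIb a b (by omega) (by omega))
    · have := hIIb v x (by omega) (by omega)
      subst this; omega
  · intro z hz
    by_cases h1 : C.adjw x = 1
    · exact Or.inr ⟨x, hx, hIII z x hz hx h1, by omega⟩
    · have := hIIb z x (by omega) (by omega)
      subst this; exact Or.inl hx
  · intro a b c h1 h2 h3
    refine hcyc [a, b, c] (by simp) ?_ ?_ a c (by simp) (by simp) h3
    · simp [h1.ne, h2.ne, h3.ne]
    · simp [h1, h2]
  · intro a b c d h1 h2 h3 h4 n1 n2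
    refine hcyc [a, b, c, d] (by simp) ?_ ?_ a d (by simp) (by simp) h4
    · simp [h1.ne, h2.ne, h3.ne, h4.ne, n1, n2]
    · simp [h1, h2, h3]
  · intro a b c d e h1 h2 h3 h4 h5 n1 n2 n3 n4 n5
    refine hcyc [a, b, c, d, e] (by simp) ?_ ?_ a e (by simp) (by simp) h5
    · simp [h1.ne, h2.ne, h3.ne, h4.ne, h5.ne, n1, n2, n3, n4, n5]
    · simp [h1, h2, h3, h4]
  · intro a b c d h1 h2 h3 n1 n2 n3 wa wb wc wd
    refine hpat [d, c, b, a] (by simp) ?_ ?_ ?_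
    · simp [h1.ne.symm, h2.ne.symm, h3.ne.symm, n1.symm, n2.symm, n3.symm]
    · simp [h1.symm, h2.symm, h3.symm]
    · simp [wa, wb, wc, wd, forbiddenPatterns]
  · intro a b c d e f h1 h2 h3 h4 h5 hn wa wb wc wd we wf
    refine hpat [f, e, d, c, b, a] (by simp) ?_ ?_ ?_
    · have := List.nodup_reverse.2 hn
      simpa using this
    · simp [h1.symm, h2.symm, h3.symm, h4.symm, h5.symm]
    · simp [wa, wb, wc, wd, we, wf, forbiddenPatterns]

/-- Facts used about the embedding. -/
structure Emb (C : Config) {N : ℕ} (φ : C.V → Fin N → ℤ) : Prop where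
  t : ∀ v, Tern (φ v)
  s : ∀ v, dot (φ v) (φ v) = C.w v
  a : ∀ u v, C.graph.Adj u v → dot (φ u) (φ v) = -1
  n : ∀ u v, u ≠ v → ¬ C.graph.Adj u v → dot (φ u) (φ v) = 0

lemma mkEmb (C : Config) (X : C.Ctx) {N : ℕ} (φ : C.V → Fin N → ℤ) (hφ : C.IsEmbedding N φ) :
    C.Emb φ := by
  have hs : ∀ v, dot (φ v) (φ v) = C.w v := fun v => by simpa using hφ v v
  have ha : ∀ u v, C.graph.Adj u v → dot (φ u) (φ v) = -1 := fun u v h => by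
    rw [hφ u v, if_neg h.ne, if_pos h]
  refine ⟨?_, hs, ha, fun u v h1 h2 => by rw [hφ u v, if_neg h1, if_neg h2]⟩
  intro v i
  by_contra hc
  push Not at hc
  have hbig : 4 ≤ φ v i * φ v i := by
    rcases le_or_gt 2 (φ v i) with h | h
    · nlinarith
    · have : φ v i ≤ -2 := by omega
      nlinarith
  have hle : C.w v ≤ 4 := by have := X.we v; have := X.le2 v; have := X.d2 v; omega
  have hsum : dot (φ v) (φ v) = φ v i * φ v i + ∑ j ∈ Finset.univ.erase i, φ v j * φ v j := by
    unfold dot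
    exact (Finset.add_sum_erase _ (fun j => φ v j * φ v j) (Finset.mem_univ i)).symm
  have hnn : 0 ≤ ∑ j ∈ Finset.univ.erase i, φ v j * φ v j :=
    Finset.sum_nonneg fun j _ => mul_self_nonneg _
  have h0 : ∑ j ∈ Finset.univ.erase i, φ v j * φ v j = 0 := by
    have := hs v; omega
  have hz : ∀ j, j ≠ i → φ v j = 0 := by
    intro j hj
    have := (Finset.sum_eq_zero_iff_of_nonneg (fun j _ => mul_self_nonneg _)).1 h0 j
      (by simp [hj])
    simpa using this
  have hw : C.w v = 4 := by have := hs v; omega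
  obtain ⟨y, hy⟩ := X.ex1 v (by have := X.we v; have := X.le2 v; omega)
  have h1 := ha v y hy
  unfold dot at h1
  rw [Finset.sum_eq_single i (fun j _ hj => by simp [hz j hj]) (by simp)] at h1
  have h2 : φ v i ∣ 1 := ⟨-φ y i, by linarith⟩
  have := Int.isUnit_iff.1 (isUnit_of_dvd_one h2)
  omega

variable {C : Config} {N : ℕ} {φ : C.V → Fin N → ℤ}

lemma Emb.vals (E : C.Emb φ) {u v : C.V} (h : u ≠ v) :
    dot (φ u) (φ v) = 0 ∧ ¬ C.graph.Adj u v ∨ dot (φ u) (φ v) = -1 ∧ C.graph.Adj u v := by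
  by_cases h' : C.graph.Adj u v
  · exact Or.inr ⟨E.a u v h', h'⟩
  · exact Or.inl ⟨E.n u v h h', h'⟩

lemma Emb.comm (_ : C.Emb φ) (u v : C.V) : dot (φ u) (φ v) = dot (φ v) (φ u) := dot_comm' _ _

lemma Emb.card (E : C.Emb φ) (v : C.V) : ((supp (φ v)).card : ℤ) = C.w v := by
  rw [card_supp (E.t v), E.s]

lemma Emb.even (E : C.Emb φ) {u v : C.V} (h : u ≠ v) (h' : ¬ C.graph.Adj u v) :
    Even (supp (φ u) ∩ supp (φ v)).card := by
  obtain ⟨k, hk⟩ := card_inter (E.t u) (E.t v)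
  rw [E.n u v h h'] at hk
  rw [Nat.even_iff]; omega

lemma Emb.odd (E : C.Emb φ) {u v : C.V} (h' : C.graph.Adj u v) :
    Odd (supp (φ u) ∩ supp (φ v)).card := by
  obtain ⟨k, hk⟩ := card_inter (E.t u) (E.t v)
  rw [E.a u v h'] at hk
  rw [Nat.odd_iff]; omega

lemma Emb.same (E : C.Emb φ) {u v t : C.V} (h : supp (φ u) = supp (φ v)) (hu : C.graph.Adj u t)
    (hv : v ≠ t) : C.graph.Adj v t := by
  by_contra hc
  have h1 := E.odd hu
  have h2 := E.even hv hc
  rw [h] at h1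
  exact (Nat.not_even_iff_odd.2 h1) h2

lemma bad_nbr (X : C.Ctx) {x y : C.V} (hx : C.IsBad x) (h : C.graph.Adj x y) : 0 < C.adjw y := by
  obtain ⟨a, b, hab, ha, hb, pa, pb⟩ := hx
  rcases X.two x a b y ha hb hab h with rfl | rfl <;> assumption

lemma good_of_zero (X : C.Ctx) {y : C.V} (hy : ¬ C.IsBad y) (h0 : C.adjw y = 0) : C.Good y :=
  ⟨hy, fun x hx hb => by have := bad_nbr X hb hx; omega⟩

lemma Good.le1 (X : C.Ctx) {y : C.V} (hy : C.Good y) : C.adjw y ≤ 1 := by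
  by_contra hc
  rcases X.spec y (by omega) with h | ⟨x, h1, h2, -⟩
  · exact hy.1 h
  · exact hy.2 x h2 h1

lemma Good.nbr_le1 (X : C.Ctx) {y z : C.V} (hy : C.Good y) (hp : 0 < C.adjw y)
    (h : C.graph.Adj y z) : C.adjw z ≤ 1 := by
  by_contra hc
  rcases X.spec z (by omega) with h' | ⟨x, h1, h2, h3⟩
  · exact hy.2 z h.symm h'
  · refine hy.2 z h.symm ⟨x, y, ?_, h2.symm, h.symm, h3, hp⟩
    rintro rfl; exact hy.1 h1

/-- A weight three vertex to which the main lemma applies. -/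
def Ok3 (C : Config) (v : C.V) : Prop :=
  C.w v = 3 ∧ C.deg v = 2 ∧ ¬ C.IsBad v ∧
    ∀ y, C.graph.Adj v y → C.adjw y ≤ 1 ∧ (0 < C.adjw y → ¬ C.IsBad y)

lemma Good.w23 (X : C.Ctx) {y : C.V} (hy : C.Good y) : C.w y = 2 ∨ C.w y = 3 := by
  have := hy.le1 X; have := X.we y; have := X.d2 y; have := X.w2 y; omega

lemma Good.ok3 (X : C.Ctx) {y : C.V} (hy : C.Good y) (h3 : C.w y = 3) : C.Ok3 y := by
  have := hy.le1 X; have h := X.we y; have := X.d2 y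
  refine ⟨h3, by omega, hy.1, fun z hz => ⟨hy.nbr_le1 X (by omega) hz, fun _ => hy.2 z hz.symm⟩⟩

lemma case22 (X : C.Ctx) (E : C.Emb φ) {u v : C.V} (hu : C.Good u) (h2 : C.w u = 2)
    (huv : u ≠ v) (hs : supp (φ u) = supp (φ v)) (hn : ¬ C.graph.Adj u v) : False := by
  have hw : C.w v = 2 := by
    have h1 := E.card u; have h2 := E.card v; rw [hs] at h1; omega
  have hle := hu.le1 X
  have e1 := X.we u; have e2 := X.we v
  have d1 := X.d2 u; have d2 := X.d2 v
  obtain ⟨x, hx⟩ := X.ex1 u (by omega)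
  have hvx : C.graph.Adj v x := E.same hs hx (by rintro rfl; exact hn hx)
  have key : ∀ t, C.graph.Adj u t → t = x := by
    intro t ht
    by_contra hne
    have hvt : C.graph.Adj v t := E.same hs ht (by rintro rfl; exact hn ht)
    exact X.c4 u x v t hx hvx.symm hvt ht huv (Ne.symm hne)
  have hdu : C.deg u ≠ 2 := by
    intro hd
    obtain ⟨b, hb, hb'⟩ := X.ex u x hd hx
    exact hb (key b hb')
  have hdv : C.deg v ≠ 2 := by
    intro hd
    obtain ⟨b, hb, hb'⟩ := X.ex v x hd hvx
    exact hb (key b (E.same hs.symm hb' (by rintro rfl; exact hn hb'.symm)))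
  exact hu.2 x hx.symm ⟨u, v, huv, hx.symm, hvx.symm, by omega, by omega⟩

lemma case33adj (X : C.Ctx) (E : C.Emb φ) {u v : C.V} (hd : C.deg u = 2)
    (h : C.graph.Adj u v) (hs : supp (φ u) = supp (φ v)) : False := by
  obtain ⟨b, hb, hb'⟩ := X.ex u v hd h
  exact X.c3 u v b h (E.same hs hb' hb.symm) hb'

/-- Ok3 vertices have a neighbour of adjusted weight zero. -/
lemma Ok3.zero (X : C.Ctx) {v : C.V} (hv : C.Ok3 v) : ∃ t1 t2, t1 ≠ t2 ∧ C.graph.Adj v t1 ∧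
    C.graph.Adj v t2 ∧ C.adjw t1 = 0 := by
  obtain ⟨h3, hd, hb, -⟩ := hv
  obtain ⟨a, ha⟩ := X.ex1 v (by omega)
  obtain ⟨b, hb1, hb2⟩ := X.ex v a hd ha
  have h1 := X.nn a; have h2 := X.nn b
  by_cases h : C.adjw a = 0
  · exact ⟨a, b, hb1.symm, ha, hb2, h⟩
  · by_cases h' : C.adjw b = 0
    · exact ⟨b, a, hb1, hb2, ha, h'⟩
    · exact absurd ⟨a, b, hb1.symm, ha, hb2, by omega, by omega⟩ hb

lemma zero_facts (X : C.Ctx) {v : C.V} (h : C.adjw v = 0) : C.w v = 2 ∧ C.deg v = 2 := by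
  have := X.we v; have := X.w2 v; have := X.d2 v; omega

lemma Emb.v1 (E : C.Emb φ) {x : C.V} {i : Fin N} (h : φ x i ≠ 0) : φ x i = 1 ∨ φ x i = -1 := by
  rcases E.t x i with h' | h' | h'
  · exact absurd h' h
  · exact Or.inl h'
  · exact Or.inr h'

lemma main23a (X : C.Ctx) (E : C.Emb φ) {u v : C.V} {f0 f1 g : Fin N} (h01 : f0 ≠ f1)
    (h0g : f0 ≠ g) (h1g : f1 ≠ g) (hu : C.Good u) (hw : C.w u = 2) (hv : C.Ok3 v)
    (huv : u ≠ v) (hn : ¬ C.graph.Adj u v)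
    (dU : ∀ y, dot (φ u) (φ y) = φ y f0 - φ y f1)
    (dV : ∀ y, dot (φ v) (φ y) = φ y f0 + φ y f1 + φ y g)
    (hc : ∀ t, C.graph.Adj u t → C.graph.Adj v t → False) : False := by
  have eu := X.we u
  have typS : ∀ s, C.graph.Adj u s → (φ s f0 = 0 ∧ φ s f1 = 1 ∧ φ s g = -1) ∨
      (φ s f0 = -1 ∧ φ s f1 = 0 ∧ φ s g = 1) := by
    intro s hs
    have h1 := E.a u s hs
    have h2 := E.n v s (by rintro rfl; exact hn hs) (fun h => hc s hs h)
    rw [dU] at h1; rw [dV] at h2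
    have := E.t s f0; have := E.t s f1; have := E.t s g
    omega
  have typT : ∀ s, C.graph.Adj v s → (φ s f0 = 0 ∧ φ s f1 = 0 ∧ φ s g = -1) ∨
      (φ s f0 = -1 ∧ φ s f1 = -1 ∧ φ s g = 1) := by
    intro s hs
    have h1 := E.a v s hs
    have h2 := E.n u s (by rintro rfl; exact hn hs.symm) (fun h => hc s h hs)
    rw [dV] at h1; rw [dU] at h2
    have := E.t s f0; have := E.t s f1; have := E.t s g
    omega
  have hul := hu.le1 X
  have hud := X.d2 u
  obtain ⟨s, hs⟩ := X.ex1 u (by omega)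
  -- `u` is a leaf
  have hdu : C.deg u ≠ 2 := by
    intro hd
    obtain ⟨s', hne, hs'⟩ := X.ex u s hd hs
    have hd0 := E.n s s' hne.symm (fun h => X.c3 u s s' hs h hs')
    have t1 := typS s hs
    have t2 := typS s' hs'
    obtain ⟨h, n0, n1, n2, hh, hh'⟩ := more3 (x := φ s) (y := φ s') h01 h0g h1g (by
      rw [hd0]
      rcases t1 with ⟨a, b, c⟩ | ⟨a, b, c⟩ <;> rcases t2 with ⟨a', b', c'⟩ | ⟨a', b', c'⟩ <;>
        rw [a, b, c, a', b', c'] <;> norm_num)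
    have w3 : ∀ y, ((φ y f0 = 0 ∧ φ y f1 = 1 ∧ φ y g = -1) ∨
      (φ y f0 = -1 ∧ φ y f1 = 0 ∧ φ y g = 1)) → φ y h ≠ 0 → 0 < C.adjw y := by
      intro y hy hyh
      have : 3 ≤ dot (φ y) (φ y) := by
        rcases hy with ⟨a, b, c⟩ | ⟨a, b, c⟩
        · exact ge3 (E.t y) h1g n1.symm n2.symm (by omega) (by omega) hyh
        · exact ge3 (E.t y) h0g n0.symm n2.symm (by omega) (by omega) hyh
      rw [E.s] at this
      have := X.we y; have := X.d2 y; omega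
    exact hu.1 ⟨s, s', hne.symm, hs, hs', w3 s t1 hh, w3 s' t2 hh'⟩
  have hup : 0 < C.adjw u := by omega
  have hsl := hu.nbr_le1 X hup hs
  have hsw : C.w s ≤ 3 := by have := X.we s; have := X.d2 s; omega
  obtain ⟨t1, t2, h12, ht1, ht2, hz⟩ := hv.zero X
  obtain ⟨wt1, dt1⟩ := zero_facts X hz
  have T1 := typT t1 ht1
  have T1' : φ t1 f0 = 0 ∧ φ t1 f1 = 0 ∧ φ t1 g = -1 := by
    rcases T1 with h | ⟨a, b, c⟩
    · exact h
    · have := ge3 (E.t t1) h01 h0g h1g (by omega) (by omega) (by omega)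
      rw [E.s] at this; omega
  obtain ⟨a1, b1, c1⟩ := T1'
  obtain ⟨h, n0, n1, n2, hh, -⟩ := more3 (x := φ t1) (y := φ t1) h01 h0g h1g (by
    rw [E.s, a1, b1, c1, wt1]; norm_num)
  have dT1 : ∀ y, dot (φ t1) (φ y) = - φ y g + φ t1 h * φ y h := by
    intro y
    rw [exact2 (E.t t1) n2.symm (by omega) hh (by rw [E.s, wt1]), c1]; ring
  have n12 : ¬ C.graph.Adj t1 t2 := fun h => X.c3 v t1 t2 ht1 h ht2
  have e12 := E.n t1 t2 h12 n12
  have T2 := typT t2 ht2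
  have lt2 := (hv.2.2.2 t2 ht2).1
  have et2 := X.we t2
  have dt2 := X.d2 t2
  have wt2 := X.w2 t2
  have hst1 : s ≠ t1 := by rintro rfl; exact hc s hs ht1
  have hst2 : s ≠ t2 := by rintro rfl; exact hc s hs ht2
  have T2' : φ t2 f0 = 0 ∧ φ t2 f1 = 0 ∧ φ t2 g = -1 := by
    rcases T2 with h' | ⟨a, b, c⟩
    · exact h'
    · rw [dT1, c] at e12
      have hh2 : φ t2 h ≠ 0 := by intro h0; rw [h0] at e12; omega
      have := ge4 (E.t t2) h01 h0g h1g n0 n1 n2 (by omega) (by omega) (by omega) hh2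
      rw [E.s] at this; omega
  obtain ⟨a2, b2, c2⟩ := T2'
  have h2h : φ t2 h = - φ t1 h := by
    rw [dT1, c2] at e12
    rcases E.v1 hh with h' | h' <;> rw [h'] at e12 ⊢ <;> omega
  have h2h0 : φ t2 h ≠ 0 := by omega
  have wt2' : C.w t2 ≠ 2 := by
    intro w2
    obtain ⟨y, hy, hy'⟩ := X.ex t1 v dt1 ht1.symm
    have e1 := E.a t1 y hy'
    have hyt : t2 ≠ y := by rintro rfl; exact n12 hy'
    have e2 := exact2 (E.t t2) n2.symm (by omega) h2h0 (by rw [E.s, w2]) (φ y)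
    rw [dT1] at e1
    rw [h2h, c2] at e2
    rcases E.vals hyt with ⟨e3, -⟩ | ⟨-, e3⟩
    · rcases E.v1 hh with h' | h' <;> rw [h'] at e1 e2 <;> omega
    · exact X.c4 v t1 y t2 ht1 hy' e3.symm ht2 hy.symm h12
  have w3 : C.w t2 = 3 := by omega
  have deg2 : C.deg t2 = 2 := by omega
  obtain ⟨k, k0, k1, k2, k3, hk, -⟩ := more4 (x := φ t2) (y := φ t2) h01 h0g h1g n0 n1 n2 (by
    rw [E.s, a2, b2, c2, w3, h2h]
    rcases E.v1 hh with h' | h' <;> rw [h'] <;> norm_num)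
  have dT2 : ∀ y, dot (φ t2) (φ y) = - φ y g - φ t1 h * φ y h + φ t2 k * φ y k := by
    intro y
    rw [exact3 (E.t t2) n2.symm k2.symm k3.symm (by omega) h2h0 hk (by rw [E.s, w3]), c2, h2h]; ring
  have hts := typS s hs
  have E1 := E.vals hst1.symm
  have E2 := E.vals hst2.symm
  rw [dT1] at E1
  rw [dT2] at E2
  have tsh := E.t s h
  have tsk := E.t s k
  have c4' : C.graph.Adj t1 s → C.graph.Adj t2 s → False := fun p q =>
    X.c4 v t1 s t2 ht1 p q.symm ht2 (by rintro rfl; exact hn hs) h12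
  rcases hts with ⟨a, b, c⟩ | ⟨a, b, c⟩
  · have E1 := E1.imp And.left And.left
    have E2 := E2.imp And.left And.left
    rw [c] at E1 E2
    rcases E.v1 hh with h' | h' <;> rcases E.v1 hk with h'' | h'' <;>
      rw [h'] at E1 E2 <;> rw [h''] at E2 <;> omega
  · rw [c] at E1 E2
    rcases E1 with ⟨E1, -⟩ | ⟨E1, A1⟩
    · have E2 := E2.imp And.left And.left
      have hsh : φ s h ≠ 0 := by
        intro z
        rw [z] at E1; omega
      have hsk : φ s k = 0 := by
        by_contra hsk
        have := ge4 (E.t s) h0g n0.symm n2.symm k0 k2 k3 (by omega) (by omega) hsh hsk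
        rw [E.s] at this; omega
      rw [hsk] at E2
      rcases E.v1 hh with h' | h' <;> rw [h'] at E1 E2 <;> omega
    · have E2' : -1 - φ t1 h * φ s h + φ t2 k * φ s k = 0 := by
        rcases E2 with ⟨E2, -⟩ | ⟨-, A2⟩
        · exact E2
        · exact (c4' A1 A2).elim
      have sh0 : φ s h = 0 := by
        rcases E.v1 hh with h' | h' <;> rw [h'] at E1 <;> omega
      have skk : φ s k = φ t2 k := by
        rw [sh0] at E2'
        rcases E.v1 hk with h'' | h'' <;> rw [h''] at E2' ⊢ <;> omega
      have ws : C.w s = 3 := by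
        have := ge3 (E.t s) h0g k0.symm k2.symm (by omega) (by omega) (by omega : φ s k ≠ 0)
        rw [E.s] at this; omega
      obtain ⟨y, hy, hy'⟩ := X.ex t2 v deg2 ht2.symm
      have yu : y ≠ u := by rintro rfl; exact hc t2 hy'.symm ht2
      have yt1 : y ≠ t1 := by rintro rfl; exact n12 hy'.symm
      have ys : y ≠ s := by rintro rfl; exact c4' A1 hy'
      have nyt1 : ¬ C.graph.Adj t1 y := fun p => X.c4 v t1 y t2 ht1 p hy'.symm ht2 hy.symm h12
      have nyu : ¬ C.graph.Adj u y := fun p => ys (X.d1 u (by omega) y s p hs)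
      have nyv : ¬ C.graph.Adj v y := fun p => X.c3 v t2 y ht2 hy' p
      have nys : ¬ C.graph.Adj s y := by
        intro p
        rcases X.two s u t1 y hs.symm A1.symm (by rintro rfl; exact hn ht1.symm) p with h | h
        · exact yu h
        · exact yt1 h
      have y1 := E.n u y yu.symm nyu
      have y2 := E.n v y hy.symm nyv
      have y3 := E.n t1 y yt1.symm nyt1
      have y4 := E.a t2 y hy'
      have y5 := E.n s y ys.symm nys
      rw [exact3 (E.t s) h0g k0.symm k2.symm (by omega) (by omega) (by omega) (by rw [E.s, ws]),
        a, c, skk] at y5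
      rw [dU] at y1
      rw [dV] at y2
      rw [dT1] at y3
      rw [dT2] at y4
      have := E.t y f0
      have := E.t y f1
      have := E.t y g
      have := E.t y h
      have := E.t y k
      rcases E.v1 hh with h' | h' <;> rcases E.v1 hk with h'' | h'' <;>
        rw [h'] at y3 y4 <;> rw [h''] at y4 y5 <;> omega

set_option maxHeartbeats 4000000 in
lemma main23b (X : C.Ctx) (E : C.Emb φ) {u v t0 : C.V} {f0 f1 g : Fin N} (h01 : f0 ≠ f1)
    (h0g : f0 ≠ g) (h1g : f1 ≠ g) (hu : C.Good u) (hw : C.w u = 2) (hv : C.Ok3 v)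
    (huv : u ≠ v) (hn : ¬ C.graph.Adj u v)
    (dU : ∀ y, dot (φ u) (φ y) = φ y f0 - φ y f1)
    (dV : ∀ y, dot (φ v) (φ y) = φ y f0 + φ y f1 + φ y g)
    (hut : C.graph.Adj u t0) (hvt : C.graph.Adj v t0) : False := by
  have eu := X.we u
  have ev := X.we v
  obtain ⟨wv, dv, vb, vn⟩ := hv
  have hvp : C.adjw v = 1 := by omega
  have hu0 : C.adjw u = 0 := by
    by_contra h
    have := X.nn u
    exact hu.2 t0 hut.symm ⟨u, v, huv, hut.symm, hvt.symm, by omega, by omega⟩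
  obtain ⟨u0, hu0t, hu0⟩ := X.ex u t0 (by omega) hut
  obtain ⟨v0, hv0t, hv0⟩ := X.ex v t0 dv hvt
  have u0v : ¬ C.graph.Adj v u0 := fun h => X.c4 u t0 v u0 hut hvt.symm h hu0 huv hu0t.symm
  have v0u : ¬ C.graph.Adj u v0 := fun h => X.c4 u t0 v v0 hut hvt.symm hv0 h huv hv0t.symm
  have u0v0 : u0 ≠ v0 := by rintro rfl; exact v0u hu0
  have u0nv : v ≠ u0 := by rintro rfl; exact hn hu0
  have v0nu : u ≠ v0 := by rintro rfl; exact hn hv0.symm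
  have nu0v0 : ¬ C.graph.Adj u0 v0 := fun h =>
    X.c5 u0 u t0 v v0 hu0.symm hut hvt.symm hv0 h hu0t u0nv.symm huv v0nu hv0t.symm
  have nt0u0 : ¬ C.graph.Adj t0 u0 := fun h => X.c3 u t0 u0 hut h hu0
  have nt0v0 : ¬ C.graph.Adj t0 v0 := fun h => X.c3 v t0 v0 hvt h hv0
  have unbr : ∀ y, C.graph.Adj u y → y = t0 ∨ y = u0 := fun y h =>
    X.two u t0 u0 y hut hu0 hu0t.symm h
  have vnbr : ∀ y, C.graph.Adj v y → y = t0 ∨ y = v0 := fun y h =>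
    X.two v t0 v0 y hvt hv0 hv0t.symm h
  have t0nbr : ∀ y, C.graph.Adj t0 y → y = u ∨ y = v := fun y h =>
    X.two t0 u v y hut.symm hvt.symm huv h
  have T0 : φ t0 f0 = -1 ∧ φ t0 f1 = 0 ∧ φ t0 g = 0 := by
    have h1 := E.a u t0 hut
    have h2 := E.a v t0 hvt
    rw [dU] at h1; rw [dV] at h2
    have := E.t t0 f0; have := E.t t0 f1; have := E.t t0 g
    omega
  have U0 : (φ u0 f0 = 0 ∧ φ u0 f1 = 1 ∧ φ u0 g = -1) ∨
      (φ u0 f0 = -1 ∧ φ u0 f1 = 0 ∧ φ u0 g = 1) := by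
    have h1 := E.a u u0 hu0
    have h2 := E.n v u0 u0nv u0v
    rw [dU] at h1; rw [dV] at h2
    have := E.t u0 f0; have := E.t u0 f1; have := E.t u0 g
    omega
  have V0 : (φ v0 f0 = 0 ∧ φ v0 f1 = 0 ∧ φ v0 g = -1) ∨
      (φ v0 f0 = -1 ∧ φ v0 f1 = -1 ∧ φ v0 g = 1) := by
    have h1 := E.a v v0 hv0
    have h2 := E.n u v0 v0nu v0u
    rw [dV] at h1; rw [dU] at h2
    have := E.t v0 f0; have := E.t v0 f1; have := E.t v0 g
    omega
  obtain ⟨a0, b0, c0⟩ := T0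
  have e00 := E.n u0 v0 u0v0 nu0v0
  have l0 := vn v0 hv0
  have ev0 := X.we v0
  have dv0 := X.d2 v0
  have eu0 := X.we u0
  have du0 := X.d2 u0
  have nnu0 := X.nn u0
  have nnv0 := X.nn v0
  have ht0 : C.adjw t0 = 0 := by
    by_contra h
    have hp : 0 < C.adjw t0 := by have := X.nn t0; omega
    have z1 : C.adjw u0 = 0 := by
      by_contra h'
      exact hu.1 ⟨t0, u0, hu0t.symm, hut, hu0, hp, by omega⟩
    have z2 : C.adjw v0 = 0 := by
      by_contra h'
      exact vb ⟨t0, v0, hv0t.symm, hvt, hv0, hp, by omega⟩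
    obtain ⟨w1, -⟩ := zero_facts X z1
    obtain ⟨w2, -⟩ := zero_facts X z2
    have : φ v0 f0 = 0 ∧ φ v0 f1 = 0 ∧ φ v0 g = -1 := by
      rcases V0 with h | ⟨a, b, c⟩
      · exact h
      · have := ge3 (E.t v0) h01 h0g h1g (by omega) (by omega) (by omega)
        rw [E.s] at this; omega
    obtain ⟨a, b, c⟩ := this
    rcases U0 with ⟨a', b', c'⟩ | ⟨a', b', c'⟩
    · rw [exact2 (E.t u0) h1g (by omega) (by omega) (by rw [E.s, w1]), b', c', b, c] at e00
      omega
    · rw [exact2 (E.t u0) h0g (by omega) (by omega) (by rw [E.s, w1]), a', c', a, c] at e00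
      omega
  obtain ⟨wt0, dt0⟩ := zero_facts X ht0
  obtain ⟨h, n0, n1, n2, hh, -⟩ := more3 (x := φ t0) (y := φ t0) h01 h0g h1g (by
    rw [E.s, a0, b0, c0, wt0]; norm_num)
  have dT0 : ∀ y, dot (φ t0) (φ y) = - φ y f0 + φ t0 h * φ y h := by
    intro y
    rw [exact2 (E.t t0) n0.symm (by omega) hh (by rw [E.s, wt0]), a0]; ring
  have e1 := E.n t0 v0 hv0t.symm nt0v0
  have e2 := E.n t0 u0 hu0t.symm nt0u0
  rw [dT0] at e1 e2
  have V0' : φ v0 f0 = 0 ∧ φ v0 f1 = 0 ∧ φ v0 g = -1 := by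
    rcases V0 with h' | ⟨a, b, c⟩
    · exact h'
    · have : φ v0 h ≠ 0 := by intro h0; rw [h0] at e1; omega
      have := ge4 (E.t v0) h01 h0g h1g n0 n1 n2 (by omega) (by omega) (by omega) this
      rw [E.s] at this; omega
  obtain ⟨a, b, c⟩ := V0'
  have v0h : φ v0 h = 0 := by
    rw [a] at e1
    rcases E.v1 hh with h' | h' <;> rw [h'] at e1 <;> omega
  have lu0 : C.adjw u0 ≤ 1 := by
    by_contra hc
    have := X.le2 u0
    exact X.p1 u0 u t0 v hu0.symm hut hvt.symm hu0t u0nv.symm huv (by omega) ‹_› ht0 hvp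
  rcases U0 with ⟨a', b', c'⟩ | ⟨a', b', c'⟩
  swap
  · have hu0h : φ u0 h ≠ 0 := by intro h0; rw [h0] at e2; omega
    obtain ⟨k, k0, k1, k2, k3, hk, -⟩ := more4 (x := φ u0) (y := φ v0) h01 h0g h1g n0 n1 n2 (by
      rw [e00, a, b, c, a', b', c', v0h]; norm_num)
    have := ge4 (E.t u0) h0g n0.symm n2.symm k0 k2 k3 (by omega) (by omega) hu0h hk
    rw [E.s] at this; omega
  have u0h : φ u0 h = 0 := by
    rw [a'] at e2
    rcases E.v1 hh with h' | h' <;> rw [h'] at e2 <;> omega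
  obtain ⟨k, k0, k1, k2, hk, hk'⟩ := more3 (x := φ u0) (y := φ v0) h01 h0g h1g (by
      rw [e00, a, b, c, a', b', c']; norm_num)
  have wu0 : C.w u0 = 3 := by
    have := ge3 (E.t u0) h1g k1.symm k2.symm (by omega) (by omega) hk
    rw [E.s] at this; omega
  have dU0 : ∀ y, dot (φ u0) (φ y) = φ y f1 - φ y g + φ u0 k * φ y k := by
    intro y
    rw [exact3 (E.t u0) h1g k1.symm k2.symm (by omega) (by omega) hk (by rw [E.s, wu0]), b', c']
    ring
  have v0k : φ v0 k = - φ u0 k := by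
    rw [dU0, b, c] at e00
    rcases E.v1 hk with h' | h' <;> rw [h'] at e00 ⊢ <;> omega
  -- the vanishing of the first three coordinates
  have far : ∀ y, y ≠ u → y ≠ v → ¬ C.graph.Adj u y → ¬ C.graph.Adj v y →
      φ y f0 = 0 ∧ φ y f1 = 0 ∧ φ y g = 0 := by
    intro y y1 y2 y3 y4
    have q1 := E.n u y y1.symm y3
    have q2 := E.n v y y2.symm y4
    rw [dU] at q1; rw [dV] at q2
    have := E.t y f0; have := E.t y f1; have := E.t y g
    omega
  obtain ⟨s, su, hs⟩ := X.ex u0 u (by omega) hu0.symm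
  have sv : s ≠ v := by rintro rfl; exact u0v hs.symm
  have st0 : s ≠ t0 := by rintro rfl; exact nt0u0 hs.symm
  have sv0 : s ≠ v0 := by rintro rfl; exact nu0v0 hs
  have su0 : s ≠ u0 := hs.ne.symm
  have nsu : ¬ C.graph.Adj u s := fun p => by rcases unbr s p with h | h <;> contradiction
  have nsv : ¬ C.graph.Adj v s := fun p => by rcases vnbr s p with h | h <;> contradiction
  obtain ⟨s0, s1, sg⟩ := far s su sv nsu nsv
  have sk : φ s k = - φ u0 k := by
    have q := E.a u0 s hs
    rw [dU0, s1, sg] at q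
    have := E.t s k
    rcases E.v1 hk with h' | h' <;> rw [h'] at q ⊢ <;> omega
  have vsv' := E.vals sv0.symm
  have vsv := vsv'.imp And.left And.left
  obtain ⟨l, m0, m1, m2, m3, hl, hl'⟩ := more4 (x := φ v0) (y := φ s) h01 h0g h1g k0 k1 k2 (by
    rw [a, b, c, s0, s1, sg, v0k, sk]
    rcases E.v1 hk with h' | h' <;> rw [h'] <;> omega)
  have wv0 : C.w v0 = 3 := by
    have := ge3 (E.t v0) k2.symm m2.symm m3.symm (by omega) hk' hl
    rw [E.s] at this; omega
  have dV0 : ∀ y, dot (φ v0) (φ y) = - φ y g - φ u0 k * φ y k + φ v0 l * φ y l := by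
    intro y
    rw [exact3 (E.t v0) k2.symm m2.symm m3.symm (by omega) hk' hl (by rw [E.s, wv0]), c, v0k]
    ring
  have sl : φ s l = - φ v0 l ∧ dot (φ v0) (φ s) = 0 := by
    rw [dV0, sg, sk] at vsv ⊢
    have := E.v1 hl'
    rcases E.v1 hk with h' | h' <;> rcases E.v1 hl with h'' | h'' <;>
      rw [h', h''] at vsv ⊢ <;> omega
  obtain ⟨sl, nsv0'⟩ := sl
  have nsv0 : ¬ C.graph.Adj v0 s := fun h => by
    rw [E.a _ _ h] at nsv0'; omega
  obtain ⟨p, pv, hp⟩ := X.ex v0 v (by omega) hv0.symm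
  have pu : p ≠ u := by rintro rfl; exact v0u hp.symm
  have pt0 : p ≠ t0 := by rintro rfl; exact nt0v0 hp.symm
  have pu0 : p ≠ u0 := by rintro rfl; exact nu0v0 hp.symm
  have pv0 : p ≠ v0 := hp.ne.symm
  have ps : p ≠ s := by rintro rfl; exact nsv0 hp
  have npu : ¬ C.graph.Adj u p := fun q => by rcases unbr p q with h | h <;> contradiction
  have npv : ¬ C.graph.Adj v p := fun q => by rcases vnbr p q with h | h <;> contradiction
  have npu0 : ¬ C.graph.Adj u0 p := fun q => by
    rcases X.two u0 u s p hu0.symm hs su.symm q with h | h <;> contradiction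
  obtain ⟨p0, p1, pg⟩ := far p pu pv npu npv
  have pk : φ p k = 0 := by
    have q := E.n u0 p pu0.symm npu0
    rw [dU0, p1, pg] at q
    rcases E.v1 hk with h' | h' <;> rw [h'] at q <;> omega
  have pl : φ p l = - φ v0 l := by
    have q := E.a v0 p hp
    rw [dV0, pk, pg] at q
    rcases E.v1 hl with h' | h' <;> rw [h'] at q ⊢ <;> omega
  have pz : C.adjw p = 0 := by
    by_contra h'
    have := X.nn p
    exact l0.2 (by omega) ⟨v, p, pv.symm, hv0.symm, hp, by omega, by omega⟩
  obtain ⟨wp, -⟩ := zero_facts X pz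
  have ls : C.adjw s ≤ 1 := by
    by_contra hc
    have := X.le2 s
    refine X.p2 s u0 u t0 v v0 hs.symm hu0.symm hut hvt.symm hv0 ?_ (by omega) (by omega)
      ‹_› ht0 hvp (by omega)
    simp [su0, su, st0, sv, sv0, hu0.ne.symm, hu0t, u0nv.symm, u0v0, hut.ne, huv, v0nu, hvt.ne.symm,
      hv0t.symm, hv0.ne]
  have es := X.we s
  have ds := X.d2 s
  obtain ⟨q, q0, q1, q2, q3, hq, hq'⟩ : ∃ q, q ≠ g ∧ q ≠ k ∧ q ≠ l ∧ q ≠ f0 ∧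
      φ s q ≠ 0 ∧ φ p q ≠ 0 := by
    obtain ⟨q, r1, r2, r3, r4, r5, r6⟩ := more4 (x := φ s) (y := φ p) h0g k0.symm k2.symm
      m0 m2 m3 (by
      rw [s0, sg, pk, sl, pl]
      have := (E.vals ps.symm).imp And.left And.left
      rcases E.v1 hl with h' | h' <;> rw [h'] <;> omega)
    exact ⟨q, r2, r3, r4, r1, r5, r6⟩
  have ws : C.w s = 3 := by
    have := ge3 (E.t s) m3.symm q1.symm q2.symm (by omega) (by omega) hq
    rw [E.s] at this; omega
  have dS : ∀ y, dot (φ s) (φ y) = - φ u0 k * φ y k - φ v0 l * φ y l + φ s q * φ y q := by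
    intro y
    rw [exact3 (E.t s) m3.symm q1.symm q2.symm (by omega) (by omega) hq (by rw [E.s, ws]), sk, sl]
    ring
  have dP : ∀ y, dot (φ p) (φ y) = - φ v0 l * φ y l + φ p q * φ y q := by
    intro y
    rw [exact2 (E.t p) q2.symm (by omega) hq' (by rw [E.s, wp]), pl]
  have nsp1 := (E.vals ps.symm).imp And.left And.left
  have pq : φ p q = - φ s q ∧ dot (φ s) (φ p) = 0 := by
    rw [dS, pk, pl] at nsp1 ⊢
    have := E.v1 hq'
    rcases E.v1 hl with h' | h' <;> rcases E.v1 hq with h'' | h'' <;>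
      rw [h', h''] at nsp1 ⊢ <;> omega
  obtain ⟨pq, nsp'⟩ := pq
  have nsp : ¬ C.graph.Adj s p := fun h => by
    rw [E.a _ _ h] at nsp'; omega
  obtain ⟨r, ru0, hr⟩ := X.ex s u0 (by omega) hs.symm
  have ru : r ≠ u := by rintro rfl; exact nsu hr.symm
  have rv : r ≠ v := by rintro rfl; exact nsv hr.symm
  have rt0 : r ≠ t0 := by
    rintro rfl
    rcases t0nbr s hr.symm with h | h <;> contradiction
  have rv0 : r ≠ v0 := by rintro rfl; exact nsv0 hr.symm
  have rp : r ≠ p := by rintro rfl; exact nsp hr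
  have nru : ¬ C.graph.Adj u r := fun q => by rcases unbr r q with h | h <;> contradiction
  have nrv : ¬ C.graph.Adj v r := fun q => by rcases vnbr r q with h | h <;> contradiction
  have rs : r ≠ s := hr.ne.symm
  have nru0 : ¬ C.graph.Adj u0 r := fun q => by
    rcases X.two u0 u s r hu0.symm hs su.symm q with h | h <;> contradiction
  have nrv0 : ¬ C.graph.Adj v0 r := fun q => by
    rcases X.two v0 v p r hv0.symm hp pv.symm q with h | h <;> contradiction
  obtain ⟨r0, r1, rg⟩ := far r ru rv nru nrv
  have g1 := E.n u0 r ru0.symm nru0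
  have g2 := E.n v0 r rv0.symm nrv0
  have g3 := E.a s r hr
  have g4 := (E.vals rp.symm).imp And.left And.left
  rw [dU0, r1, rg] at g1
  have rk : φ r k = 0 := by
    rcases E.v1 hk with h' | h' <;> rw [h'] at g1 <;> omega
  rw [dV0, rg, rk] at g2
  have rl : φ r l = 0 := by
    rcases E.v1 hl with h' | h' <;> rw [h'] at g2 <;> omega
  rw [dS, rk, rl] at g3
  rw [dP, rl, pq] at g4
  rcases E.v1 hq with h' | h' <;> rw [h'] at g3 g4 <;> omega

lemma main23 (X : C.Ctx) (E : C.Emb φ) {u v : C.V} {f0 f1 g : Fin N} (h01 : f0 ≠ f1)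
    (h0g : f0 ≠ g) (h1g : f1 ≠ g) (hu : C.Good u) (hw : C.w u = 2) (hv : C.Ok3 v)
    (huv : u ≠ v) (hn : ¬ C.graph.Adj u v)
    (dU : ∀ y, dot (φ u) (φ y) = φ y f0 - φ y f1)
    (dV : ∀ y, dot (φ v) (φ y) = φ y f0 + φ y f1 + φ y g) : False := by
  by_cases hc : ∃ t, C.graph.Adj u t ∧ C.graph.Adj v t
  · obtain ⟨t, h1, h2⟩ := hc
    exact main23b X E h01 h0g h1g hu hw hv huv hn dU dV h1 h2
  · exact main23a X E h01 h0g h1g hu hw hv huv hn dU dV fun t h1 h2 => hc ⟨t, h1, h2⟩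

lemma Emb.flip (E : C.Emb φ) (σ : Fin N → ℤ) (hσ : ∀ i, σ i = 1 ∨ σ i = -1) :
    C.Emb (fun v i => σ i * φ v i) := by
  have hd : ∀ u v, dot (fun i => σ i * φ u i) (fun i => σ i * φ v i) = dot (φ u) (φ v) := by
    intro u v
    unfold dot
    refine Finset.sum_congr rfl fun i _ => ?_
    rcases hσ i with h | h <;> simp only [h] <;> ring
  refine ⟨?_, fun v => by rw [hd]; exact E.s v, fun u v h => by rw [hd]; exact E.a u v h,
    fun u v h h' => by rw [hd]; exact E.n u v h h'⟩
  intro v i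
  have := E.t v i
  simp only
  rcases hσ i with h | h <;> rw [h] <;> omega

lemma case23 (X : C.Ctx) (E : C.Emb φ) {u v : C.V} (hu : C.Good u) (hw : C.w u = 2)
    (hv : C.Ok3 v) (huv : u ≠ v) (hn : ¬ C.graph.Adj u v) :
    supp (φ u) ∩ supp (φ v) = ∅ := by
  by_contra hne
  have hcu : (supp (φ u)).card = 2 := by have := E.card u; omega
  have hcv : (supp (φ v)).card = 3 := by have := E.card v; have := hv.1; omega
  have hev := E.even huv hn
  have hle : (supp (φ u) ∩ supp (φ v)).card ≤ 2 := by
    rw [← hcu]; exact Finset.card_le_card Finset.inter_subset_left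
  have hpos : 0 < (supp (φ u) ∩ supp (φ v)).card :=
    Finset.card_pos.2 (Finset.nonempty_iff_ne_empty.2 hne)
  have h2 : (supp (φ u) ∩ supp (φ v)).card = 2 := by
    rw [Nat.even_iff] at hev; omega
  obtain ⟨f0, f1, h01, hf⟩ := Finset.card_eq_two.1 h2
  have m0 : f0 ∈ supp (φ u) ∩ supp (φ v) := by rw [hf]; simp
  have m1 : f1 ∈ supp (φ u) ∩ supp (φ v) := by rw [hf]; simp
  rw [Finset.mem_inter, mem_supp, mem_supp] at m0 m1
  obtain ⟨g, hg, hg'⟩ : ∃ g ∈ supp (φ v), g ∉ supp (φ u) ∩ supp (φ v) := by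
    by_contra hc
    push Not at hc
    have := Finset.card_le_card (fun i hi => hc i hi : supp (φ v) ⊆ _)
    omega
  rw [mem_supp] at hg
  rw [hf] at hg'
  simp only [Finset.mem_insert, Finset.mem_singleton, not_or] at hg'
  have n0 : f0 ≠ g := fun h => hg'.1 h.symm
  have n1 : f1 ≠ g := fun h => hg'.2 h.symm
  have hwu : dot (φ u) (φ u) = 2 := by rw [E.s, hw]
  have hwv : dot (φ v) (φ v) = 3 := by rw [E.s, hv.1]
  -- sign change making `v` positive
  let σ : Fin N → ℤ := fun i => if φ v i = -1 then -1 else 1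
  have hσ : ∀ i, σ i = 1 ∨ σ i = -1 := by
    intro i; simp only [σ]; split_ifs <;> simp
  have hσv : ∀ i, φ v i ≠ 0 → σ i * φ v i = 1 := by
    intro i hi
    rcases E.v1 hi with h | h <;> simp [σ, h]
  have hσ0 : ∀ i x, φ x i ≠ 0 → σ i * φ x i ≠ 0 := by
    intro i x hi
    rcases hσ i with h | h <;> rw [h] <;> omega
  have E' := E.flip σ hσ
  have dV := exact3 (E'.t v) h01 n0 n1 (hσ0 _ _ m0.2) (hσ0 _ _ m1.2) (hσ0 _ _ hg)
    (by rw [E'.s, hv.1])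
  have dU := exact2 (E'.t u) h01 (hσ0 _ _ m0.1) (hσ0 _ _ m1.1) (by rw [E'.s, hw])
  have huv0 := E'.n u v huv hn
  rw [dU] at huv0
  simp only [hσv f0 m0.2, hσv f1 m1.2, hσv g hg] at dV huv0
  rcases E'.v1 (hσ0 _ _ m0.1) with h | h
  · have h1 : σ f1 * φ u f1 = -1 := by omega
    refine main23 X E' h01 n0 n1 hu hw hv huv hn (fun y => ?_) (fun y => ?_)
    · rw [dU, h, h1]; ring
    · rw [dV]; ring
  · have h1 : σ f1 * φ u f1 = 1 := by omega
    refine main23 X E' h01.symm n1 n0 hu hw hv huv hn (fun y => ?_) (fun y => ?_)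
    · rw [dU, h, h1]; ring
    · rw [dV]; ring

lemma case22' (X : C.Ctx) (E : C.Emb φ) {u v : C.V} (hu : C.Good u) (h2 : C.w u = 2)
    (h2' : C.w v = 2) (huv : u ≠ v) (hn : ¬ C.graph.Adj u v) :
    supp (φ u) ∩ supp (φ v) = ∅ := by
  by_contra hne
  have hcu : (supp (φ u)).card = 2 := by have := E.card u; omega
  have hcv : (supp (φ v)).card = 2 := by have := E.card v; omega
  have hev := E.even huv hn
  have hpos : 0 < (supp (φ u) ∩ supp (φ v)).card :=
    Finset.card_pos.2 (Finset.nonempty_iff_ne_empty.2 hne)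
  rw [Nat.even_iff] at hev
  have e1 : supp (φ u) ∩ supp (φ v) = supp (φ u) :=
    Finset.eq_of_subset_of_card_le Finset.inter_subset_left (by omega)
  have e2 : supp (φ u) ∩ supp (φ v) = supp (φ v) :=
    Finset.eq_of_subset_of_card_le Finset.inter_subset_right (by omega)
  exact case22 X E hu h2 huv (e1.symm.trans e2) hn

lemma case33 (X : C.Ctx) (E : C.Emb φ) {u v : C.V} (hu : C.Good u) (hv : C.Good v)
    (wu : C.w u = 3) (wv : C.w v = 3) (huv : u ≠ v) (hn : ¬ C.graph.Adj u v) :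
    supp (φ u) ∩ supp (φ v) = ∅ := by
  by_contra hne
  have ou := hu.ok3 X wu
  have ov := hv.ok3 X wv
  have hcu : (supp (φ u)).card = 3 := by have := E.card u; omega
  have hcv : (supp (φ v)).card = 3 := by have := E.card v; omega
  have pu : 0 < C.adjw u := by have := X.we u; have := ou.2.1; omega
  have pv : 0 < C.adjw v := by have := X.we v; have := ov.2.1; omega
  have hev := E.even huv hn
  have hpos : 0 < (supp (φ u) ∩ supp (φ v)).card :=
    Finset.card_pos.2 (Finset.nonempty_iff_ne_empty.2 hne)
  have hle : (supp (φ u) ∩ supp (φ v)).card ≤ 3 := by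
    rw [← hcu]; exact Finset.card_le_card Finset.inter_subset_left
  have h2 : (supp (φ u) ∩ supp (φ v)).card = 2 := by
    rw [Nat.even_iff] at hev; omega
  have priv : ∀ A B : Finset (Fin N), A.card = 3 → (A ∩ B).card = 2 →
      ∃ c ∈ A, c ∉ B ∧ ∀ i ∈ A, i ∉ B → i = c := by
    intro A B hA hAB
    have : (A \ B).card = 1 := by have := Finset.card_inter_add_card_sdiff A B; omega
    obtain ⟨c, hc⟩ := Finset.card_eq_one.1 this
    have hm : ∀ i, i ∈ A \ B ↔ i = c := by intro i; rw [hc]; simp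
    simp only [Finset.mem_sdiff] at hm
    exact ⟨c, ((hm c).2 rfl).1, ((hm c).2 rfl).2, fun i h1 h2 => (hm i).1 ⟨h1, h2⟩⟩
  obtain ⟨c, hc1, hc2, hc3⟩ := priv _ _ hcu h2
  obtain ⟨d, hd1, hd2, hd3⟩ := priv _ _ hcv (by rw [Finset.inter_comm]; exact h2)
  -- a vertex adjacent to one and disjoint from the other contains the private coordinate
  have hit : ∀ (a b p : C.V) (c : Fin N), C.graph.Adj a p →
      supp (φ p) ∩ supp (φ b) = ∅ → (∀ i ∈ supp (φ a), i ∉ supp (φ b) → i = c) →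
      c ∈ supp (φ p) := by
    intro a b p c hap hpb hc
    have h1 := (E.odd hap).pos
    obtain ⟨i, hi⟩ := Finset.card_pos.1 h1
    rw [Finset.mem_inter] at hi
    have : i ∉ supp (φ b) := fun h => by
      have : i ∈ supp (φ p) ∩ supp (φ b) := Finset.mem_inter.2 ⟨hi.2, h⟩
      rw [hpb] at this; simp at this
    rw [← hc i hi.1 this]; exact hi.2
  have disj : ∀ (a b : C.V) (i : Fin N), supp (φ a) ∩ supp (φ b) = ∅ → i ∈ supp (φ a) →
      i ∈ supp (φ b) → False := by
    intro a b i h h1 h2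
    have : i ∈ supp (φ a) ∩ supp (φ b) := Finset.mem_inter.2 ⟨h1, h2⟩
    rw [h] at this; simp at this
  obtain ⟨p, u', hpu', hp, hu', pz⟩ := ou.zero X
  obtain ⟨q, -, -, hq, -, qz⟩ := ov.zero X
  obtain ⟨wp, -⟩ := zero_facts X pz
  obtain ⟨wq, -⟩ := zero_facts X qz
  have gp : C.Good p := good_of_zero X (hu.2 p hp.symm) pz
  have gq : C.Good q := good_of_zero X (hv.2 q hq.symm) qz
  have npv : ¬ C.graph.Adj p v := fun h => gp.1 ⟨u, v, huv, hp.symm, h, pu, pv⟩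
  have nqu : ¬ C.graph.Adj q u := fun h => gq.1 ⟨u, v, huv, h, hq.symm, pu, pv⟩
  have pv' : p ≠ v := by rintro rfl; exact hn hp
  have qu' : q ≠ u := by rintro rfl; exact hn hq.symm
  have cp := hit u v p c hp (case23 X E gp wp ov pv' npv) hc3
  have dq := hit v u q d hq (case23 X E gq wq ou qu' nqu) hd3
  have npu' : ¬ C.graph.Adj p u' := fun h => X.c3 u p u' hp h hu'
  have nbu' := hu.2 u' hu'.symm
  have u'v : u' ≠ v := by rintro rfl; exact hn hu'
  have u'q : q ≠ u' := by rintro rfl; exact nqu hu'.symm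
  have lu' := (ou.2.2.2 u' hu').1
  have eu' := X.we u'
  have du' := X.d2 u'
  have wu' := X.w2 u'
  have small : C.w u' = 2 → C.Good u' → ¬ C.graph.Adj u' v → False := by
    intro w2 gu' hnv
    have := hit u v u' c hu' (case23 X E gu' w2 ov u'v hnv) hc3
    exact disj p u' c (case22' X E gp wp w2 hpu' npu') cp this
  by_cases hz : C.adjw u' = 0
  · have gu' := good_of_zero X nbu' hz
    exact small (zero_facts X hz).1 gu' fun h => gu'.1 ⟨u, v, huv, hu'.symm, h, pu, pv⟩
  have nnu' := X.nn u'
  have nu'v : ¬ C.graph.Adj u' v := fun h => nbu' ⟨u, v, huv, hu'.symm, h, pu, pv⟩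
  by_cases w2 : C.w u' = 2
  · refine small w2 ⟨nbu', fun x hx => ?_⟩ nu'v
    rw [X.d1 u' (by omega) x u hx.symm hu'.symm]
    exact hu.1
  have ok : C.Ok3 u' := by
    refine ⟨by omega, by omega, nbu', fun y hy => ?_⟩
    by_cases hyu : y = u
    · subst hyu; exact ⟨hu.le1 X, fun _ => hu.1⟩
    · have : ¬ 0 < C.adjw y := fun h => nbu' ⟨u, y, Ne.symm hyu, hu'.symm, hy, pu, h⟩
      exact ⟨by omega, fun h => absurd h this⟩
  have nqu'' : ¬ C.graph.Adj q u' := fun h => gq.1 ⟨u', v, u'v, h, hq.symm, by omega, pv⟩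
  have cu' : c ∉ supp (φ u') := disj p u' c (case23 X E gp wp ok hpu' npu') cp
  have du'' : d ∉ supp (φ u') := disj q u' d (case23 X E gq wq ok u'q nqu'') dq
  have same : supp (φ u) ∩ supp (φ u') = supp (φ v) ∩ supp (φ u') := by
    ext i
    simp only [Finset.mem_inter]
    constructor
    · rintro ⟨h1, h2⟩
      refine ⟨?_, h2⟩
      by_contra h
      exact cu' (hc3 i h1 h ▸ h2)
    · rintro ⟨h1, h2⟩
      refine ⟨?_, h2⟩
      by_contra h
      exact du'' (hd3 i h1 h ▸ h2)
  have o := E.odd hu'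
  have e := E.even u'v.symm (fun h => nu'v h.symm)
  rw [same] at o
  exact (Nat.not_even_iff_odd.2 o) e

lemma good_standard (X : C.Ctx) (E : C.Emb φ) {S : Set C.V} (hS : ∀ y ∈ S, C.Good y) :
    C.IsStandardOn N φ S := by
  intro u hu v hv
  have gu := hS u hu
  have gv := hS v hv
  split_ifs with h1 h2
  · subst h1
    rw [Finset.inter_self]; exact E.card u
  · have o := E.odd h2
    have c1 := E.card u
    have c2 := E.card v
    have l1 : (supp (φ u) ∩ supp (φ v)).card ≤ (supp (φ u)).card :=
      Finset.card_le_card Finset.inter_subset_left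
    have l2 : (supp (φ u) ∩ supp (φ v)).card ≤ (supp (φ v)).card :=
      Finset.card_le_card Finset.inter_subset_right
    have w1 := gu.w23 X
    have w2 := gv.w23 X
    rw [Nat.odd_iff] at o
    by_contra hc
    have h3 : (supp (φ u) ∩ supp (φ v)).card = 3 := by omega
    have e1 : supp (φ u) ∩ supp (φ v) = supp (φ u) :=
      Finset.eq_of_subset_of_card_le Finset.inter_subset_left (by omega)
    have e2 : supp (φ u) ∩ supp (φ v) = supp (φ v) :=
      Finset.eq_of_subset_of_card_le Finset.inter_subset_right (by omega)
    exact case33adj X E (gu.ok3 X (by omega)).2.1 h2 (e1.symm.trans e2)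
  · have : supp (φ u) ∩ supp (φ v) = ∅ := by
      rcases gu.w23 X with a | a <;> rcases gv.w23 X with b | b
      · exact case22' X E gu a b h1 h2
      · exact case23 X E gu a (gv.ok3 X b) h1 h2
      · rw [Finset.inter_comm]
        exact case23 X E gv b (gu.ok3 X a) (Ne.symm h1) (fun h => h2 h.symm)
      · exact case33 X E gu gv a b h1 h2
    simp [this]

lemma outside_good (X : C.Ctx) (hac : C.graph.IsAcyclic) (hwc : C.WorkingConditions)
    (hbad : ∃ x, C.IsBad x) (m : ℕ) (vc : ℕ → C.V) (h : C.IsEBPCand m vc) :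
    ∀ y ∈ C.OutsidePart m vc, C.Good y := by
  obtain ⟨hch, hcont, hf, hb⟩ := h
  obtain ⟨p, hp, mb, vb, hB⟩ := hwc.2.2.2.2.2.2.2 hbad
  have hcont := hcont p hp mb vb hB
  obtain ⟨hBc, hlen, hBw, hBb⟩ := hB
  -- bad positions are interior
  have hint : ∀ p ∈ badPatterns, ∀ i : Fin p.length, (p.get i).2 = true →
      0 < (i : ℕ) ∧ (i : ℕ) + 1 < p.length := by decide
  have inB : ∀ x, C.IsBad x → ∀ y, (y = x ∨ C.graph.Adj x y) → ∃ j ≤ m, vc j = y := by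
    intro x hx y hy
    obtain ⟨i, hi, rfl⟩ := (hBb x).1 hx
    obtain ⟨i0, i1⟩ := hint p hp i hi
    rcases hy with rfl | hy
    · exact hcont i (by omega)
    · have a1 := hBc.2 i (by omega)
      have a2 := hBc.2 (i - 1) (by omega)
      rw [show (i : ℕ) - 1 + 1 = i by omega] at a2
      have ne : vb (i - 1) ≠ vb (i + 1) := fun h => by
        have := hBc.1 _ (by omega) _ (by omega) h; omega
      rcases X.two _ _ _ y a2.symm a1 ne hy with rfl | rfl
      · exact hcont _ (by omega)
      · exact hcont _ (by omega)
  -- the ends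
  have ends : ∀ v : ℕ → C.V, C.IsChain m v → 2 ≤ m → C.adjw (v 1) = 0 → C.adjw (v 2) = 0 →
      (∀ j ≤ m, ∃ i ≤ m, vc j = v i) → C.Good (v 0) ∧ C.Good (v 1) ∧ C.Good (v 2) := by
    intro v hv hm z1 z2 hsub
    have a1 : C.graph.Adj (v 0) (v 1) := hv.2 0 (by omega)
    have a2 : C.graph.Adj (v 1) (v 2) := hv.2 1 (by omega)
    have b1 : ¬ C.IsBad (v 1) := fun h => by have := bad_nbr X h a2; omega
    have b2 : ¬ C.IsBad (v 2) := fun h => by have := bad_nbr X h a2.symm; omega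
    have b0 : ¬ C.IsBad (v 0) := fun h => by
      have := bad_nbr X h a1
      omega
    refine ⟨⟨b0, ?_⟩, good_of_zero X b1 z1, good_of_zero X b2 z2⟩
    intro x hx hbx
    obtain ⟨j, hj, rfl⟩ := inB x hbx x (Or.inl rfl)
    obtain ⟨i, hi, he⟩ := hsub j hj
    rw [he] at hx hbx
    have hi0 : i ≠ 0 := by rintro rfl; exact b0 hbx
    have hi1 : i ≠ 1 := by rintro rfl; exact b1 hbx
    exact C.noCycle hac i v (by omega)
      ⟨fun a ha b hb => hv.1 a (by omega) b (by omega), fun a ha => hv.2 a (by omega)⟩ hx.symm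
  intro y hy
  rcases hy with (hy | ⟨hl, hy⟩) | ⟨hl, hy⟩
  · constructor
    · intro hyb
      obtain ⟨j, hj, he⟩ := inB y hyb y (Or.inl rfl)
      exact hy j hj he
    · intro x hx hxb
      obtain ⟨j, hj, he⟩ := inB x hxb y (Or.inr hx)
      exact hy j hj he
  · obtain ⟨hm, z1, z2⟩ := hf.resolve_left hl
    obtain ⟨g0, g1, g2⟩ := ends vc hch hm z1 z2 fun j hj => ⟨j, hj, rfl⟩
    rcases hy with rfl | rfl | rfl <;> assumption
  · obtain ⟨hm, z1, z2⟩ := hb.resolve_left hl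
    obtain ⟨g0, g1, g2⟩ := ends (fun i => vc (m - i)) ⟨fun i hi j hj h => by
        have := hch.1 _ (by omega) _ (by omega) h; omega, fun i hi => by
        have := hch.2 (m - (i + 1)) (by omega)
        rw [show m - (i + 1) + 1 = m - i by omega] at this
        exact this.symm⟩ hm z1 z2 fun j hj => ⟨m - j, by omega, by
          congr 1; omega⟩
    rcases hy with rfl | rfl | rfl <;> assumption

end Config

/-- Corollary 5.3: if there is a bad vertex of adjusted weight at least `1`, then the
outside part is embedded standardly. -/
theorem statement4 (C : Config) (hlin : C.IsLinear) (hwc : C.WorkingConditions)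
    (x : C.V) (hx : C.IsBad x) (hwx : 1 ≤ C.adjw x)
    (N : ℕ) (φ : C.V → Fin N → ℤ) (hφ : C.IsEmbedding N φ)
    (m : ℕ) (vc : ℕ → C.V) (hebp : C.IsExtBadPart m vc) :
    C.IsStandardOn N φ (C.OutsidePart m vc) := by
  have X := C.mkCtx hlin hwc x hx hwx
  exact Config.good_standard X (C.mkEmb X φ hφ)
    (Config.outside_good X hlin.2 hwc ⟨x, hx⟩ m vc hebp.1)

end LensPaper
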